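/- There exist an integer p ≥ 2, an integer n ≥ 1, a connected interconnection Γ = [γ_ij] ∈ ℝ^{p×p}, and a map Q : ℝ≥0 → Q̄_n satisfying liminf_{T→∞} (1/T) σ_min(∫₀^T Q_t dt) > 0, such that for some initial condition the solutions x_i of the array ẋ_i(t) = Q_t Σ_{j≠i} γ_ij (x_j(t) − x_i(t)), i = 1,…,p, do not synchronize (there is no common trajectory x̄ with |x_i(t) − x̄(t)| → 0 for all i). -/

import Mathlib

open Matrix MeasureTheory Filter
open scoped Kronecker

noncomputable section

/-- Euclidean norm of a vector. -/
def eunorm {ι : Type*} [Fintype ι] (v : ι → ℝ) : ℝ := Real.sqrt (∑ i, v i ^ 2)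

/-- Spectral (induced 2-) norm of a matrix. -/
def specNorm {m n : Type*} [Fintype m] [Fintype n] (M : Matrix m n ℝ) : ℝ :=
  sSup {c : ℝ | ∃ v : n → ℝ, eunorm v ≤ 1 ∧ c = eunorm (M.mulVec v)}

/-- Smallest singular value of a matrix. -/
def sigmaMin {m n : Type*} [Fintype m] [Fintype n] (M : Matrix m n ℝ) : ℝ :=
  sInf {c : ℝ | ∃ v : n → ℝ, eunorm v = 1 ∧ c = eunorm (M.mulVec v)}

/-- Largest singular value of a matrix. -/
def sigmaMax {m n : Type*} [Fintype m] [Fintype n] (M : Matrix m n ℝ) : ℝ :=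
  sSup {c : ℝ | ∃ v : n → ℝ, eunorm v = 1 ∧ c = eunorm (M.mulVec v)}

/-- A continuous-time interconnection matrix. -/
def IsInterconnection {p : ℕ} (Γ : Matrix (Fin p) (Fin p) ℝ) : Prop :=
  (∀ i j, i ≠ j → 0 ≤ Γ i j) ∧
  ∀ i, Γ i i = -∑ j ∈ Finset.univ.filter (fun j => j ≠ i), Γ i j

/-- Connectedness of the graph of a matrix. -/
def ConnectedMat {p : ℕ} (Γ : Matrix (Fin p) (Fin p) ℝ) : Prop :=
  ∃ v : Fin p, ∀ u : Fin p, Relation.ReflTransGen (fun i j => 0 < Γ i j) u v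

/-- Membership in `Q̄_n`: symmetric positive semidefinite with spectral norm at most 1. -/
def InQbar {n : ℕ} (R : Matrix (Fin n) (Fin n) ℝ) : Prop :=
  R.PosSemidef ∧ specNorm R ≤ 1

/-- `δ(ε, T) = min{ε/2, ε³/(240 T⁵)}`. -/
def deltaCT (ε T : ℝ) : ℝ := min (ε / 2) (ε ^ 3 / (240 * T ^ 5))

/-- Sufficient excitation for `Q : ℝ≥0 → Q_n`. -/
def SuffExcitingCT {n : ℕ} (Q : ℝ → Matrix (Fin n) (Fin n) ℝ) : Prop :=
  ∃ ε T : ℕ → ℝ, (∀ i, 0 < ε i) ∧ (∀ i, 0 < T i) ∧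
    (∀ i, ε i ≤ sigmaMin (Matrix.of fun a b =>
      ∫ t in (∑ j ∈ Finset.range i, T j)..((∑ j ∈ Finset.range i, T j) + T i), Q t a b)) ∧
    Tendsto (fun N => ∑ i ∈ Finset.range N, deltaCT (ε i) (T i)) atTop atTop

/-- Persistence of excitation for `Q : ℝ≥0 → Q_n`. -/
def PersExcitingCT {n : ℕ} (Q : ℝ → Matrix (Fin n) (Fin n) ℝ) : Prop :=
  ∃ ε T : ℝ, 0 < ε ∧ 0 < T ∧ ∀ t : ℝ, 0 ≤ t →
    ε ≤ sigmaMin (Matrix.of fun a b => ∫ s in t..(t + T), Q s a b)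

/-!
Let `(u, w)` be the orthonormal frame of the plane turned by the angle `log s / 2`, and take the
rank-one gain `q qᵀ` with `q = u / s - w / 2`. Then `y = exp (1 / s) u` solves `ẏ = -⟪q, y⟫ q`: the
component of `q` along `w` turns `y` exactly as fast as the frame, while `⟪q, y⟫` is only of order
`1 / s`, so that the norm of `y` decays at the relative rate `1 / s ^ 2`, which is integrable, and
`y` does not tend to zero. On the other hand `⟪v, w⟫ ^ 2 = (1 - cos (log s - β)) / 2` for a unit
vector `v` of angle `β / 2`, and the antiderivative `s (cos (log s - β) + sin (log s - β)) / 2` of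
the oscillating term has amplitude at most `3 s / 4`. The frame thus sweeps the plane fast enough
for the integral of the gain to grow linearly in every direction. A node that follows a leader at
rest along `y` never synchronizes with it.
-/

section EuclideanNorm

variable {ι : Type*} [Fintype ι]

lemma eunorm_eq_norm_toLp (v : ι → ℝ) : eunorm v = ‖WithLp.toLp 2 v‖ := by
  simp [eunorm, EuclideanSpace.norm_eq]

lemma eunorm_nonneg (v : ι → ℝ) : 0 ≤ eunorm v := Real.sqrt_nonneg _

lemma eunorm_sq (v : ι → ℝ) : eunorm v ^ 2 = v ⬝ᵥ v := by
  rw [eunorm, Real.sq_sqrt (by positivity)]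
  simp only [dotProduct, sq]

lemma eunorm_smul (c : ℝ) (v : ι → ℝ) : eunorm (c • v) = |c| * eunorm v := by
  simp only [eunorm_eq_norm_toLp, WithLp.toLp_smul, norm_smul, Real.norm_eq_abs]

lemma eunorm_sub_le (u v w : ι → ℝ) : eunorm (u - v) ≤ eunorm (u - w) + eunorm (v - w) := by
  simpa only [eunorm_eq_norm_toLp, WithLp.toLp_sub, dist_eq_norm]
    using dist_triangle_right (WithLp.toLp 2 u) (WithLp.toLp 2 v) (WithLp.toLp 2 w)

lemma abs_dotProduct_le_eunorm_mul_eunorm (v w : ι → ℝ) :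
    |v ⬝ᵥ w| ≤ eunorm v * eunorm w := by
  simpa only [eunorm_eq_norm_toLp, EuclideanSpace.inner_toLp_toLp, star_trivial, mul_comm]
    using abs_real_inner_le_norm (WithLp.toLp 2 w) (WithLp.toLp 2 v)

lemma exists_eunorm_eq_one [Nonempty ι] : ∃ v : ι → ℝ, eunorm v = 1 := by
  classical
  exact ⟨Pi.single (Classical.arbitrary ι) 1, by simp [eunorm_eq_norm_toLp]⟩

end EuclideanNorm

section SingularValues

variable {m n : Type*} [Fintype m] [Fintype n]

lemma specNorm_le {M : Matrix m n ℝ} {c : ℝ} (hc : 0 ≤ c)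
    (hM : ∀ v, eunorm (M *ᵥ v) ≤ c * eunorm v) : specNorm M ≤ c := by
  refine Real.sSup_le ?_ hc
  rintro _ ⟨v, hv, rfl⟩
  exact (hM v).trans (mul_le_of_le_one_right hc hv)

lemma sigmaMin_le (M : Matrix m n ℝ) {v : n → ℝ} (hv : eunorm v = 1) :
    sigmaMin M ≤ eunorm (M *ᵥ v) :=
  csInf_le ⟨0, by rintro _ ⟨w, -, rfl⟩; exact eunorm_nonneg _⟩ ⟨v, hv, rfl⟩

lemma le_sigmaMin_of_le_dotProduct_mulVec [Nonempty n] {M : Matrix n n ℝ} {c : ℝ}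
    (hM : ∀ v, eunorm v = 1 → c ≤ v ⬝ᵥ (M *ᵥ v)) : c ≤ sigmaMin M := by
  obtain ⟨e, he⟩ := exists_eunorm_eq_one (ι := n)
  refine le_csInf ⟨_, e, he, rfl⟩ ?_
  rintro _ ⟨v, hv, rfl⟩
  calc c ≤ v ⬝ᵥ (M *ᵥ v) := hM v hv
    _ ≤ eunorm v * eunorm (M *ᵥ v) :=
      (le_abs_self _).trans (abs_dotProduct_le_eunorm_mul_eunorm _ _)
    _ = eunorm (M *ᵥ v) := by rw [hv, one_mul]

lemma eunorm_vecMulVec_mulVec_le (u : m → ℝ) (w v : n → ℝ) :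
    eunorm (vecMulVec u w *ᵥ v) ≤ eunorm u * eunorm w * eunorm v := by
  rw [vecMulVec_mulVec, op_smul_eq_smul, eunorm_smul, mul_assoc, mul_comm (eunorm u)]
  exact mul_le_mul_of_nonneg_right (abs_dotProduct_le_eunorm_mul_eunorm w v) (eunorm_nonneg u)

lemma eunorm_vecMulVec_self_mulVec_le {q : n → ℝ} (hq : eunorm q ≤ 1) (v : n → ℝ) :
    eunorm (vecMulVec q q *ᵥ v) ≤ eunorm v :=
  (eunorm_vecMulVec_mulVec_le q q v).trans <| mul_le_of_le_one_left (eunorm_nonneg v) <|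
    mul_le_one₀ hq (eunorm_nonneg q) hq

lemma dotProduct_vecMulVec_self_mulVec (q v : n → ℝ) :
    v ⬝ᵥ (vecMulVec q q *ᵥ v) = (v ⬝ᵥ q) ^ 2 := by
  rw [vecMulVec_mulVec, op_smul_eq_smul, dotProduct_smul, smul_eq_mul, dotProduct_comm q v, sq]

lemma inQbar_vecMulVec_self {n : ℕ} {q : Fin n → ℝ} (hq : eunorm q ≤ 1) :
    InQbar (vecMulVec q q) :=
  ⟨posSemidef_vecMulVec_self_star q, specNorm_le zero_le_one fun v => by
    simpa only [one_mul] using eunorm_vecMulVec_self_mulVec_le hq v⟩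

end SingularValues

section MatrixIntegral

variable {m n : Type*}

/-- The entrywise integral `∫ t in a..b, Q t` of a matrix-valued function. -/
def matrixIntegral (Q : ℝ → Matrix m n ℝ) (a b : ℝ) : Matrix m n ℝ :=
  Matrix.of fun i j => ∫ t in a..b, Q t i j

variable [Fintype m] [Fintype n] {a b : ℝ}

lemma dotProduct_matrixIntegral_mulVec {Q : ℝ → Matrix m n ℝ}
    (hQ : ∀ i j, IntervalIntegrable (fun t => Q t i j) volume a b) (w : m → ℝ) (v : n → ℝ) :
    w ⬝ᵥ (matrixIntegral Q a b *ᵥ v) = ∫ t in a..b, w ⬝ᵥ (Q t *ᵥ v) := by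
  have hrow (i : m) : IntervalIntegrable (fun t => ∑ j, Q t i j * v j) volume a b := by
    simpa only [Finset.sum_fn] using
      IntervalIntegrable.sum Finset.univ fun j _ => (hQ i j).mul_const (v j)
  simp only [dotProduct, mulVec, matrixIntegral, of_apply]
  rw [intervalIntegral.integral_finsetSum fun i _ => (hrow i).const_mul (w i)]
  refine Finset.sum_congr rfl fun i _ => ?_
  rw [intervalIntegral.integral_const_mul,
    intervalIntegral.integral_finsetSum fun j _ => (hQ i j).mul_const (v j)]
  simp only [intervalIntegral.integral_mul_const]

lemma eunorm_matrixIntegral_mulVec_le {Q : ℝ → Matrix m n ℝ}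
    (hQ : ∀ i j, IntervalIntegrable (fun t => Q t i j) volume a b)
    (hQ1 : ∀ t ∈ Set.uIoc a b, ∀ v, eunorm (Q t *ᵥ v) ≤ eunorm v) (v : n → ℝ) :
    eunorm (matrixIntegral Q a b *ᵥ v) ≤ eunorm v * |b - a| := by
  set w := matrixIntegral Q a b *ᵥ v
  -- Pairing the integral with its own value reduces the bound to one for a scalar integral.
  rcases (eunorm_nonneg w).eq_or_lt with hzero | hpos
  · rw [← hzero]
    exact mul_nonneg (eunorm_nonneg v) (abs_nonneg _)
  have hsq : eunorm w ^ 2 ≤ eunorm w * eunorm v * |b - a| :=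
    calc eunorm w ^ 2 = ∫ t in a..b, w ⬝ᵥ (Q t *ᵥ v) := by
          rw [eunorm_sq, ← dotProduct_matrixIntegral_mulVec hQ]
      _ ≤ eunorm w * eunorm v * |b - a| :=
        (Real.le_norm_self _).trans <|
          intervalIntegral.norm_integral_le_of_norm_le_const fun t ht =>
            (abs_dotProduct_le_eunorm_mul_eunorm _ _).trans <|
              mul_le_mul_of_nonneg_left (hQ1 t ht v) hpos.le
  rw [sq, mul_assoc] at hsq
  exact le_of_mul_le_mul_left hsq hpos

lemma sigmaMin_matrixIntegral_le [Nonempty n] {Q : ℝ → Matrix m n ℝ}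
    (hQ : ∀ i j, IntervalIntegrable (fun t => Q t i j) volume a b)
    (hQ1 : ∀ t ∈ Set.uIoc a b, ∀ v, eunorm (Q t *ᵥ v) ≤ eunorm v) :
    sigmaMin (matrixIntegral Q a b) ≤ |b - a| := by
  obtain ⟨e, he⟩ := exists_eunorm_eq_one (ι := n)
  simpa only [he, one_mul] using
    (sigmaMin_le _ he).trans (eunorm_matrixIntegral_mulVec_le hQ hQ1 e)

end MatrixIntegral

lemma le_liminf_one_div_mul {f : ℝ → ℝ} {c C d : ℝ} (hlow : ∀ᶠ T in atTop, c * T - d ≤ f T)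
    (hup : ∀ᶠ T in atTop, f T ≤ C * T) : c ≤ liminf (fun T => (1 / T) * f T) atTop := by
  have hlim : Tendsto (fun T : ℝ => c - d / T) atTop (nhds c) := by
    simpa only [sub_zero, id] using
      tendsto_const_nhds.sub (tendsto_const_nhds.div_atTop (tendsto_id (α := ℝ)))
  have hle : ∀ᶠ T in atTop, c - d / T ≤ (1 / T) * f T := by
    filter_upwards [hlow, eventually_gt_atTop 0] with T hT hT0
    rw [one_div_mul_eq_div, le_div_iff₀ hT0, sub_mul, div_mul_cancel₀ _ hT0.ne']
    exact hT
  have hge : ∀ᶠ T in atTop, (1 / T) * f T ≤ C := by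
    filter_upwards [hup, eventually_gt_atTop 0] with T hT hT0
    rwa [one_div_mul_eq_div, div_le_iff₀ hT0]
  rw [← hlim.liminf_eq]
  exact liminf_le_liminf hle hlim.isBoundedUnder_ge (isCoboundedUnder_ge_of_eventually_le _ hge)

section Arrays

variable {p n : ℕ}

/-- `x` is a trajectory of the array `ẋ_i = Q_t ∑_{j ≠ i} γ_ij (x_j - x_i)` for `t ≥ 0`. -/
def IsArraySolution (Γ : Matrix (Fin p) (Fin p) ℝ) (Q : ℝ → Matrix (Fin n) (Fin n) ℝ)
    (x : Fin p → ℝ → Fin n → ℝ) : Prop :=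
  ∀ i, ∀ t : ℝ, 0 ≤ t → ∀ a : Fin n,
    HasDerivAt (fun s => x i s a)
      (((Q t).mulVec
        (∑ j ∈ Finset.univ.filter (fun j => j ≠ i), Γ i j • (x j t - x i t))) a) t

/-- Synchronization: all the trajectories `x i` approach a common trajectory. -/
def Synchronizes (x : Fin p → ℝ → Fin n → ℝ) : Prop :=
  ∃ xbar : ℝ → Fin n → ℝ, ∀ i, Tendsto (fun t => eunorm (x i t - xbar t)) atTop (nhds 0)

lemma Synchronizes.tendsto_eunorm_sub {x : Fin p → ℝ → Fin n → ℝ} (hx : Synchronizes x)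
    (i j : Fin p) : Tendsto (fun t => eunorm (x i t - x j t)) atTop (nhds 0) := by
  obtain ⟨xbar, hxbar⟩ := hx
  refine squeeze_zero (fun t => eunorm_nonneg _) (fun t => eunorm_sub_le _ _ (xbar t)) ?_
  simpa only [add_zero] using (hxbar i).add (hxbar j)

/-- The interconnection of two nodes in which node `1` follows node `0`, which listens to no one. -/
def leaderFollower : Matrix (Fin 2) (Fin 2) ℝ := !![0, 0; 1, -1]

lemma isInterconnection_leaderFollower : IsInterconnection leaderFollower := by
  refine ⟨fun i j hij => ?_, fun i => ?_⟩
  · fin_cases i <;> fin_cases j <;> simp [leaderFollower] at hij ⊢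
  · fin_cases i <;> simp [leaderFollower, Finset.sum_filter]

lemma connectedMat_leaderFollower : ConnectedMat leaderFollower := by
  refine ⟨0, fun u => ?_⟩
  fin_cases u
  · exact .refl
  · exact .single (by simp [leaderFollower])

lemma isArraySolution_leaderFollower {Q : ℝ → Matrix (Fin n) (Fin n) ℝ} {y : ℝ → Fin n → ℝ}
    (hy : ∀ t, 0 ≤ t → HasDerivAt y (-(Q t *ᵥ y t)) t) :
    IsArraySolution leaderFollower Q ![0, y] := by
  intro i t ht a
  fin_cases i
  · simpa [leaderFollower, Finset.sum_filter] using hasDerivAt_const t (0 : ℝ)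
  · simpa [leaderFollower, Finset.sum_filter, mulVec_neg] using hasDerivAt_pi.1 (hy t ht) a

lemma not_synchronizes_leader_at_rest {y : ℝ → Fin n → ℝ} {r : ℝ} (hr : 0 < r)
    (hy : ∀ᶠ t in atTop, r ≤ eunorm (y t)) : ¬ Synchronizes ![0, y] := by
  intro hsync
  have hlim : Tendsto (fun t => eunorm (y t)) atTop (nhds 0) := by
    simpa using hsync.tendsto_eunorm_sub 1 0
  exact hr.not_ge (ge_of_tendsto hlim hy)

end Arrays

section RotatingFrame

/-- The first vector of the orthonormal frame of the plane rotated by the angle `θ`. -/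
def frameFst (θ : ℝ) : Fin 2 → ℝ := ![Real.cos θ, Real.sin θ]

/-- The second vector of the orthonormal frame of the plane rotated by the angle `θ`. -/
def frameSnd (θ : ℝ) : Fin 2 → ℝ := ![-Real.sin θ, Real.cos θ]

lemma frameFst_dotProduct_frameFst (α θ : ℝ) :
    frameFst α ⬝ᵥ frameFst θ = Real.cos (α - θ) := by
  simp [frameFst, Real.cos_sub]

lemma frameFst_dotProduct_frameSnd (α θ : ℝ) :
    frameFst α ⬝ᵥ frameSnd θ = Real.sin (α - θ) := by
  simp only [frameFst, frameSnd, dotProduct, Fin.sum_univ_two, cons_val_zero, cons_val_one,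
    Real.sin_sub]
  ring

lemma frameSnd_dotProduct_frameSnd (θ : ℝ) : frameSnd θ ⬝ᵥ frameSnd θ = 1 := by
  simp [frameSnd, ← sq]

lemma eunorm_frameFst (θ : ℝ) : eunorm (frameFst θ) = 1 := by
  simp [eunorm, frameFst]

lemma exists_frameFst_eq {v : Fin 2 → ℝ} (hv : eunorm v = 1) : ∃ α, frameFst α = v := by
  have hnorm : ‖(⟨v 0, v 1⟩ : ℂ)‖ = 1 := by
    rw [← hv, Complex.norm_eq_sqrt_sq_add_sq, eunorm, Fin.sum_univ_two]
  obtain ⟨α, hα⟩ := (Complex.norm_eq_one_iff _).1 hnorm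
  refine ⟨α, ?_⟩
  ext i
  fin_cases i
  · simpa [frameFst, Complex.exp_ofReal_mul_I_re] using congrArg Complex.re hα
  · simpa [frameFst, Complex.exp_ofReal_mul_I_im] using congrArg Complex.im hα

lemma continuous_frameFst : Continuous frameFst := by
  unfold frameFst
  fun_prop

lemma continuous_frameSnd : Continuous frameSnd := by
  unfold frameSnd
  fun_prop

lemma hasDerivAt_frameFst (θ : ℝ) : HasDerivAt frameFst (frameSnd θ) θ := by
  refine hasDerivAt_pi.2 fun i => ?_
  fin_cases i
  · exact Real.hasDerivAt_cos θ
  · exact Real.hasDerivAt_sin θ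

end RotatingFrame

section RotatingGain

/-- The direction along which the gain acts at time `s`, in a frame that turns by the angle
`log s / 2`. -/
def gainDirection (s : ℝ) : Fin 2 → ℝ :=
  s⁻¹ • frameFst (Real.log s / 2) - (1 / 2 : ℝ) • frameSnd (Real.log s / 2)

/-- The rank-one gain of the counterexample. Time is shifted by `2`, so that the direction has norm
at most one, and reflected, so that the gain is continuous on the whole line. -/
def rotatingGain (t : ℝ) : Matrix (Fin 2) (Fin 2) ℝ :=
  vecMulVec (gainDirection (|t| + 2)) (gainDirection (|t| + 2))

/-- A solution of `ẏ = -⟪q, y⟫ q`, with `q` the direction of the gain, that does not tend to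
zero. -/
def spiral (s : ℝ) : Fin 2 → ℝ := Real.exp s⁻¹ • frameFst (Real.log s / 2)

lemma frameFst_dotProduct_gainDirection (α s : ℝ) :
    frameFst α ⬝ᵥ gainDirection s =
      s⁻¹ * Real.cos (α - Real.log s / 2) - 1 / 2 * Real.sin (α - Real.log s / 2) := by
  simp only [gainDirection, dotProduct_sub, dotProduct_smul, frameFst_dotProduct_frameFst,
    frameFst_dotProduct_frameSnd, smul_eq_mul]

lemma gainDirection_dotProduct_spiral (s : ℝ) :
    gainDirection s ⬝ᵥ spiral s = Real.exp s⁻¹ * s⁻¹ := by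
  rw [spiral, dotProduct_smul, dotProduct_comm, frameFst_dotProduct_gainDirection, sub_self,
    Real.cos_zero, Real.sin_zero, mul_one, mul_zero, sub_zero, smul_eq_mul]

lemma eunorm_gainDirection_le_one {s : ℝ} (hs : 2 ≤ s) : eunorm (gainDirection s) ≤ 1 := by
  have hinv : s⁻¹ ≤ 1 / 2 := by rw [← one_div]; gcongr
  have hinv0 : 0 ≤ s⁻¹ := by positivity
  have hsq : eunorm (gainDirection s) ^ 2 = s⁻¹ ^ 2 + 1 / 4 := by
    simp only [eunorm_sq, gainDirection, dotProduct_sub, sub_dotProduct, dotProduct_smul,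
      smul_dotProduct, frameFst_dotProduct_frameFst, frameFst_dotProduct_frameSnd,
      frameSnd_dotProduct_frameSnd, dotProduct_comm (frameSnd _) (frameFst _), sub_self,
      Real.cos_zero, Real.sin_zero, smul_eq_mul]
    ring
  refine (sq_le_one_iff₀ (eunorm_nonneg _)).1 ?_
  rw [hsq]
  nlinarith

lemma continuousOn_gainDirection : ContinuousOn gainDirection {0}ᶜ := by
  have hphase : ContinuousOn (fun s : ℝ => Real.log s / 2) {0}ᶜ := Real.continuousOn_log.div_const 2
  have hfst := continuous_frameFst.comp_continuousOn hphase
  have hsnd := continuous_frameSnd.comp_continuousOn hphase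
  exact (continuousOn_inv₀.smul hfst).sub (hsnd.const_smul (1 / 2 : ℝ))

lemma continuous_rotatingGain : Continuous rotatingGain := by
  have hdir : Continuous fun t : ℝ => gainDirection (|t| + 2) :=
    continuousOn_gainDirection.comp_continuous (by fun_prop) fun t =>
      (by positivity : |t| + 2 ≠ 0)
  exact hdir.matrix_vecMulVec hdir

lemma intervalIntegrable_rotatingGain_apply (i j : Fin 2) (a b : ℝ) :
    IntervalIntegrable (fun t => rotatingGain t i j) volume a b :=
  (continuous_rotatingGain.matrix_elem i j).intervalIntegrable a b

lemma eunorm_gainDirection_abs_add_two_le_one (t : ℝ) :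
    eunorm (gainDirection (|t| + 2)) ≤ 1 :=
  eunorm_gainDirection_le_one (le_add_of_nonneg_left (abs_nonneg t))

lemma inQbar_rotatingGain (t : ℝ) : InQbar (rotatingGain t) :=
  inQbar_vecMulVec_self (eunorm_gainDirection_abs_add_two_le_one t)

lemma eunorm_rotatingGain_mulVec_le (t : ℝ) (v : Fin 2 → ℝ) :
    eunorm (rotatingGain t *ᵥ v) ≤ eunorm v :=
  eunorm_vecMulVec_self_mulVec_le (eunorm_gainDirection_abs_add_two_le_one t) v

lemma one_le_eunorm_spiral {s : ℝ} (hs : 0 ≤ s) : 1 ≤ eunorm (spiral s) := by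
  rw [spiral, eunorm_smul, eunorm_frameFst, mul_one, Real.abs_exp]
  exact Real.one_le_exp (inv_nonneg.2 hs)

lemma hasDerivAt_spiral {s : ℝ} (hs : s ≠ 0) :
    HasDerivAt spiral (-(vecMulVec (gainDirection s) (gainDirection s) *ᵥ spiral s)) s := by
  have hphase : HasDerivAt (fun r => frameFst (Real.log r / 2))
      ((s⁻¹ / 2) • frameSnd (Real.log s / 2)) s :=
    (hasDerivAt_frameFst _).scomp s ((Real.hasDerivAt_log hs).div_const 2)
  refine ((hasDerivAt_inv hs).exp.smul hphase).congr_deriv ?_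
  rw [vecMulVec_mulVec, op_smul_eq_smul, gainDirection_dotProduct_spiral, gainDirection]
  module

lemma hasDerivAt_spiral_add_two {t : ℝ} (ht : 0 ≤ t) :
    HasDerivAt (fun r => spiral (r + 2)) (-(rotatingGain t *ᵥ spiral (t + 2))) t := by
  rw [rotatingGain, abs_of_nonneg ht]
  exact (hasDerivAt_spiral (by positivity)).comp_add_const t 2

end RotatingGain

section Excitation

/-- An antiderivative of `(1 - cos (log s - β)) / 16 - s⁻²`, which is a lower bound for the power
`⟪v, q⟫²` of the gain direction `q` along the unit vector `v` of angle `β / 2`. -/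
def energyBound (β s : ℝ) : ℝ :=
  (s - s * (Real.cos (Real.log s - β) + Real.sin (Real.log s - β)) / 2) / 16 + s⁻¹

lemma hasDerivAt_energyBound (β : ℝ) {s : ℝ} (hs : s ≠ 0) :
    HasDerivAt (energyBound β) ((1 - Real.cos (Real.log s - β)) / 16 - s⁻¹ ^ 2) s := by
  have hlog : HasDerivAt (fun r => Real.log r - β) s⁻¹ s := (Real.hasDerivAt_log hs).sub_const β
  have hosc := ((hasDerivAt_id s).mul (hlog.cos.add hlog.sin)).div_const 2
  refine ((((hasDerivAt_id s).sub hosc).div_const 16).add (hasDerivAt_inv hs)).congr_deriv ?_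
  simp only [id, Pi.add_apply]
  field_simp
  ring

lemma abs_cos_add_sin_le (x : ℝ) : |Real.cos x + Real.sin x| ≤ 3 / 2 := by
  refine abs_le_of_sq_le_sq ?_ (by norm_num)
  nlinarith [Real.cos_sq_add_sin_sq x, sq_nonneg (Real.cos x - Real.sin x)]

lemma le_energyBound (β : ℝ) {s : ℝ} (hs : 0 ≤ s) : s / 64 ≤ energyBound β s := by
  have hosc := mul_le_mul_of_nonneg_left (abs_le.1 (abs_cos_add_sin_le (Real.log s - β))).2 hs
  rw [energyBound]
  linarith [inv_nonneg.2 hs]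

lemma energyBound_le (β : ℝ) {s : ℝ} (hs : 0 ≤ s) : energyBound β s ≤ 7 / 64 * s + s⁻¹ := by
  have hosc := mul_le_mul_of_nonneg_left (abs_le.1 (abs_cos_add_sin_le (Real.log s - β))).1 hs
  rw [energyBound]
  linarith

lemma le_sq_frameFst_dotProduct_gainDirection (α s : ℝ) :
    (1 - Real.cos (Real.log s - 2 * α)) / 16 - s⁻¹ ^ 2 ≤
      (frameFst α ⬝ᵥ gainDirection s) ^ 2 := by
  have hdouble : Real.cos (Real.log s - 2 * α) = 1 - 2 * Real.sin (α - Real.log s / 2) ^ 2 := by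
    rw [← Real.cos_neg, show -(Real.log s - 2 * α) = 2 * (α - Real.log s / 2) by ring,
      Real.cos_two_mul, Real.cos_sq']
    ring
  rw [frameFst_dotProduct_gainDirection, hdouble]
  set c := Real.cos (α - Real.log s / 2)
  set d := Real.sin (α - Real.log s / 2)
  have hc : (s⁻¹ * c) ^ 2 ≤ s⁻¹ ^ 2 := by
    rw [mul_pow]
    exact mul_le_of_le_one_right (sq_nonneg _) (Real.cos_sq_le_one _)
  linarith [sq_nonneg (s⁻¹ * c - d / 4)]

lemma le_dotProduct_matrixIntegral_rotatingGain_mulVec {v : Fin 2 → ℝ} (hv : eunorm v = 1) {T : ℝ}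
    (hT : 0 ≤ T) : T / 64 - 1 ≤ v ⬝ᵥ (matrixIntegral rotatingGain 0 T *ᵥ v) := by
  obtain ⟨α, rfl⟩ := exists_frameFst_eq hv
  have hcont : Continuous fun t => frameFst α ⬝ᵥ (rotatingGain t *ᵥ frameFst α) :=
    continuous_const.dotProduct (continuous_rotatingGain.matrix_mulVec continuous_const)
  have hderiv (t : ℝ) (ht : 0 ≤ t) := (hasDerivAt_energyBound (2 * α)
    (show t + 2 ≠ 0 by positivity)).comp_add_const t 2
  rw [dotProduct_matrixIntegral_mulVec fun i j => intervalIntegrable_rotatingGain_apply i j 0 T]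
  calc T / 64 - 1 ≤ energyBound (2 * α) (T + 2) - energyBound (2 * α) (0 + 2) := by
        linarith [le_energyBound (2 * α) (show 0 ≤ T + 2 by positivity),
          energyBound_le (2 * α) (show (0 : ℝ) ≤ 0 + 2 by norm_num)]
    _ ≤ ∫ t in (0 : ℝ)..T, frameFst α ⬝ᵥ (rotatingGain t *ᵥ frameFst α) := by
      refine intervalIntegral.sub_le_integral_of_hasDeriv_right_of_le hT
        (fun t ht => (hderiv t ht.1).continuousAt.continuousWithinAt)
        (fun t ht => (hderiv t ht.1.le).hasDerivWithinAt) hcont.integrableOn_Icc fun t ht => ?_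
      rw [rotatingGain, abs_of_nonneg ht.1.le, dotProduct_vecMulVec_self_mulVec]
      exact le_sq_frameFst_dotProduct_gainDirection α (t + 2)

lemma liminf_sigmaMin_matrixIntegral_rotatingGain_pos :
    0 < liminf (fun T : ℝ => (1 / T) * sigmaMin (matrixIntegral rotatingGain 0 T)) atTop := by
  refine (by norm_num : (0 : ℝ) < 1 / 64).trans_le (le_liminf_one_div_mul (C := 1) (d := 1) ?_ ?_)
  · filter_upwards [eventually_ge_atTop 0] with T hT
    rw [one_div_mul_eq_div]
    exact le_sigmaMin_of_le_dotProduct_mulVec fun v hv =>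
      le_dotProduct_matrixIntegral_rotatingGain_mulVec hv hT
  · filter_upwards [eventually_ge_atTop 0] with T hT
    simpa [abs_of_nonneg hT] using sigmaMin_matrixIntegral_le
      (fun i j => intervalIntegrable_rotatingGain_apply i j 0 T)
      fun t _ => eunorm_rotatingGain_mulVec_le t

end Excitation

theorem stmt9 :
    ∃ (p n : ℕ), 2 ≤ p ∧ 1 ≤ n ∧
      ∃ (Γ : Matrix (Fin p) (Fin p) ℝ) (Q : ℝ → Matrix (Fin n) (Fin n) ℝ),
        IsInterconnection Γ ∧ ConnectedMat Γ ∧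
        (∀ t : ℝ, 0 ≤ t → InQbar (Q t)) ∧
        (∀ a b : Fin n, ∀ s u : ℝ, IntervalIntegrable (fun t => Q t a b) volume s u) ∧
        0 < Filter.liminf
          (fun T : ℝ => (1 / T) * sigmaMin (Matrix.of fun a b => ∫ t in (0 : ℝ)..T, Q t a b))
          atTop ∧
        ∃ x : Fin p → ℝ → Fin n → ℝ,
          (∀ i, ∀ t : ℝ, 0 ≤ t → ∀ a : Fin n,
            HasDerivAt (fun s => x i s a)
              (((Q t).mulVec
                (∑ j ∈ Finset.univ.filter (fun j => j ≠ i), Γ i j • (x j t - x i t))) a) t) ∧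
          ¬ ∃ xbar : ℝ → Fin n → ℝ,
              ∀ i, Tendsto (fun t => eunorm (x i t - xbar t)) atTop (nhds 0) := by
  refine ⟨2, 2, le_rfl, one_le_two, leaderFollower, rotatingGain, isInterconnection_leaderFollower,
    connectedMat_leaderFollower, fun t _ => inQbar_rotatingGain t,
    intervalIntegrable_rotatingGain_apply, liminf_sigmaMin_matrixIntegral_rotatingGain_pos,
    ![0, fun t => spiral (t + 2)],
    isArraySolution_leaderFollower fun t ht => hasDerivAt_spiral_add_two ht,
    not_synchronizes_leader_at_rest one_pos ?_⟩
  filter_upwards [eventually_ge_atTop 0] with t ht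
  exact one_le_eunorm_spiral (by positivity)
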